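/- Let E = EuclideanSpace ℝ (Fin n), ε > 0, m ≥ 1, S ⊆ E a finite set, and ℓ : E → Fin m a labeling such that any two points of S with different labels are more than 2ε apart: for all p, q ∈ S with ℓ(p) ≠ ℓ(q), ‖p − q‖ > 2ε. Then there exists a classifier g : E → (Fin m → ℝ) such that for every pair of distinct classes i ≠ j, the margin function x ↦ g(x)_j − g(x)_i is Lipschitz on E with constant 1/ε, and for every p ∈ S and every class i ≠ ℓ(p), g(p)_{ℓ(p)} − g(p)_i ≥ 1; in particular every point of S is certified via the global margin Lipschitz constants: g(p)_{ℓ(p)} − g(p)_i ≥ ε·(1/ε) for all i ≠ ℓ(p). (The categorical extension of Theorem 3 described in Appendix A.4: the m-class analogue of the Voronoi-distance construction, with one logit per class set to the signed boundary distance and the rest to zero.) -/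

import Mathlib

/-!
The logit of class `i` is the `ε`-thickened indicator `max (1 - d i / ε) 0`, where `d i` is the
distance to the points labelled `i`. As distinct classes are `2ε` apart, `u = 1 - d j / ε` and
`v = 1 - d i / ε` satisfy `u + v ≤ 0`, so that the margin `max u 0 - max v 0` is the median of
`u`, `0` and `-v`, which are all `1/ε`-Lipschitz. Subtracting two logits therefore costs no factor
`2` in the Lipschitz constant.
-/

open Metric
open scoped NNReal

section Lipschitz

theorem max_zero_sub_max_zero_of_add_nonpos {α : Type*} [AddCommGroup α] [LinearOrder α]
    [IsOrderedAddMonoid α] {a b : α} (h : a + b ≤ 0) :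
    max a 0 - max b 0 = max a (min (-b) 0) := by
  have hab : a ≤ -b := le_neg_iff_add_nonpos_right.mpr h
  rcases le_total a 0 with ha | ha
  · rw [max_eq_right ha, max_eq_right (le_min hab ha), zero_sub, ← min_neg_neg, neg_zero]
  · have hb : b ≤ 0 := neg_nonneg.mp (ha.trans hab)
    rw [max_eq_left ha, max_eq_right hb, min_eq_right (neg_nonneg.mpr hb), max_eq_left ha, sub_zero]

variable {X : Type*} [PseudoEMetricSpace X] {K : ℝ≥0} {u v : X → ℝ}

theorem lipschitzWith_max_zero_sub_max_zero_of_add_nonpos (hu : LipschitzWith K u)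
    (hv : LipschitzWith K v) (huv : ∀ x, u x + v x ≤ 0) :
    LipschitzWith K fun x => max (u x) 0 - max (v x) 0 := by
  simp only [max_zero_sub_max_zero_of_add_nonpos (huv _)]
  simpa only [max_self, Pi.neg_apply] using hu.max (hv.neg.min_const 0)

end Lipschitz

section Thickening

variable {X : Type*} [PseudoMetricSpace X] {A B : Set X} {r δ : ℝ}

theorem le_infDist_add_infDist (hA : A.Nonempty) (hB : B.Nonempty)
    (hAB : ∀ a ∈ A, ∀ b ∈ B, r ≤ dist a b) (x : X) : r ≤ infDist x A + infDist x B := by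
  rw [← sub_le_iff_le_add, le_infDist hA]
  intro a ha
  rw [sub_le_comm, le_infDist hB]
  intro b hb
  linarith [hAB a ha b hb, dist_triangle_left a b x]

theorem lipschitzWith_one_sub_infDist_div (hδ : 0 < δ) (A : Set X) :
    LipschitzWith δ.toNNReal⁻¹ fun x => 1 - infDist x A / δ := by
  refine LipschitzWith.of_le_add_mul _ fun x y => ?_
  have h : infDist y A / δ ≤ (infDist x A + dist y x) / δ := by
    gcongr
    exact infDist_le_infDist_add_dist
  rw [add_div, dist_comm] at h
  rw [NNReal.coe_inv, Real.coe_toNNReal _ hδ.le, inv_mul_eq_div]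
  linarith

theorem coe_thickenedIndicator_empty (hδ : 0 < δ) (x : X) :
    (thickenedIndicator hδ (∅ : Set X) x : ℝ) = 0 := by
  rw [thickenedIndicator_zero hδ _ (by simp), NNReal.coe_zero]

theorem coe_thickenedIndicator_of_nonempty (hδ : 0 < δ) (hA : A.Nonempty) (x : X) :
    (thickenedIndicator hδ A x : ℝ) = max (1 - infDist x A / δ) 0 := by
  have h : thickenedIndicatorAux δ A x = ENNReal.ofReal (1 - infDist x A / δ) := by
    rw [thickenedIndicatorAux, ENNReal.ofReal_sub _ (div_nonneg infDist_nonneg hδ.le),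
      ENNReal.ofReal_one, ENNReal.ofReal_div_of_pos hδ, infDist,
      ENNReal.ofReal_toReal (infEDist_ne_top hA)]
  rw [thickenedIndicator_apply, ENNReal.coe_toNNReal_eq_toReal, h, ENNReal.toReal_ofReal']

theorem lipschitzWith_thickenedIndicator_sub (hδ : 0 < δ)
    (hAB : ∀ a ∈ A, ∀ b ∈ B, 2 * δ ≤ dist a b) :
    LipschitzWith δ.toNNReal⁻¹
      fun x => (thickenedIndicator hδ A x - thickenedIndicator hδ B x : ℝ) := by
  rcases A.eq_empty_or_nonempty with rfl | hA
  · simp only [coe_thickenedIndicator_empty, zero_sub]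
    exact LipschitzWith.neg (lipschitzWith_thickenedIndicator hδ B)
  rcases B.eq_empty_or_nonempty with rfl | hB
  · simp only [coe_thickenedIndicator_empty, sub_zero]
    exact lipschitzWith_thickenedIndicator hδ A
  simp only [coe_thickenedIndicator_of_nonempty hδ hA, coe_thickenedIndicator_of_nonempty hδ hB]
  refine lipschitzWith_max_zero_sub_max_zero_of_add_nonpos
    (lipschitzWith_one_sub_infDist_div hδ A) (lipschitzWith_one_sub_infDist_div hδ B) fun x => ?_
  have h : 2 ≤ infDist x A / δ + infDist x B / δ := by
    rw [← add_div, le_div_iff₀ hδ]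
    exact le_infDist_add_infDist hA hB hAB x
  linarith

end Thickening

section Voronoi

variable {X ι : Type*} [PseudoMetricSpace X] {ε : ℝ} {S : Set X} {ℓ : X → ι}

/-- The classifier of the Voronoi-distance construction: at `x`, the logit of class `i` falls
linearly from `1` to `0` as the distance from `x` to the points of `S` labelled `i` grows from `0`
to `ε`. It vanishes identically when no point of `S` has label `i`. -/
noncomputable def voronoiClassifier (hε : 0 < ε) (S : Set X) (ℓ : X → ι) (x : X) (i : ι) : ℝ :=
  thickenedIndicator hε {p ∈ S | ℓ p = i} x

theorem lipschitzWith_voronoiClassifier_margin (hε : 0 < ε)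
    (hsep : ∀ p ∈ S, ∀ q ∈ S, ℓ p ≠ ℓ q → 2 * ε ≤ dist p q) {i j : ι} (hij : i ≠ j) :
    LipschitzWith ε.toNNReal⁻¹
      fun x => voronoiClassifier hε S ℓ x j - voronoiClassifier hε S ℓ x i := by
  refine lipschitzWith_thickenedIndicator_sub hε ?_
  rintro p ⟨hp, rfl⟩ q ⟨hq, rfl⟩
  exact hsep p hp q hq hij.symm

theorem voronoiClassifier_label_eq_one (hε : 0 < ε) {p : X} (hp : p ∈ S) :
    voronoiClassifier hε S ℓ p (ℓ p) = 1 := by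
  have hmem : p ∈ {q ∈ S | ℓ q = ℓ p} := ⟨hp, rfl⟩
  rw [voronoiClassifier, thickenedIndicator_one hε _ hmem, NNReal.coe_one]

theorem voronoiClassifier_eq_zero_of_forall_le_dist (hε : 0 < ε) {x : X} {i : ι}
    (h : ∀ q ∈ S, ℓ q = i → ε ≤ dist x q) : voronoiClassifier hε S ℓ x i = 0 := by
  have hx : x ∉ thickening ε {q ∈ S | ℓ q = i} := by
    rw [mem_thickening_iff]
    rintro ⟨q, ⟨hq, hqi⟩, hxq⟩
    exact (h q hq hqi).not_gt hxq
  rw [voronoiClassifier, thickenedIndicator_zero hε _ hx, NNReal.coe_zero]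

theorem voronoiClassifier_margin_eq_one (hε : 0 < ε) {p : X} (hp : p ∈ S)
    (hsep : ∀ q ∈ S, ℓ p ≠ ℓ q → ε ≤ dist p q) {i : ι} (hi : i ≠ ℓ p) :
    voronoiClassifier hε S ℓ p (ℓ p) - voronoiClassifier hε S ℓ p i = 1 := by
  have hzero : voronoiClassifier hε S ℓ p i = 0 :=
    voronoiClassifier_eq_zero_of_forall_le_dist hε fun q hq hqi => hsep q hq (hqi ▸ hi.symm)
  rw [voronoiClassifier_label_eq_one hε hp, hzero, sub_zero]

end Voronoi

theorem voronoi_construction_categorical_general {X ι : Type*} [PseudoMetricSpace X] {ε : ℝ}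
    (hε : 0 < ε) (S : Set X) (ℓ : X → ι)
    (hsep : ∀ p ∈ S, ∀ q ∈ S, ℓ p ≠ ℓ q → 2 * ε ≤ dist p q) :
    ∃ g : X → ι → ℝ,
      (∀ i j : ι, i ≠ j → ∀ x₁ x₂ : X,
        |(g x₁ j - g x₁ i) - (g x₂ j - g x₂ i)| ≤ (1 / ε) * dist x₁ x₂) ∧
      (∀ p ∈ S, ∀ i : ι, i ≠ ℓ p → g p (ℓ p) - g p i ≥ 1) ∧
      (∀ p ∈ S, ∀ i : ι, i ≠ ℓ p → g p (ℓ p) - g p i ≥ ε * (1 / ε)) := by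
  have hmargin : ∀ p ∈ S, ∀ i : ι, i ≠ ℓ p →
      voronoiClassifier hε S ℓ p (ℓ p) - voronoiClassifier hε S ℓ p i ≥ 1 := by
    intro p hp i hi
    refine (voronoiClassifier_margin_eq_one hε hp (fun q hq hpq => ?_) hi).ge
    linarith [hsep p hp q hq hpq]
  refine ⟨voronoiClassifier hε S ℓ, fun i j hij x₁ x₂ => ?_, hmargin, ?_⟩
  · simpa only [Real.dist_eq, NNReal.coe_inv, Real.coe_toNNReal _ hε.le, one_div] using
      (lipschitzWith_voronoiClassifier_margin hε hsep hij).dist_le_mul x₁ x₂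
  · rwa [mul_one_div_cancel hε.ne']

theorem voronoi_construction_categorical
    {n : ℕ} (ε : ℝ) (hε : 0 < ε)
    {m : ℕ} (hm : 1 ≤ m)
    (S : Set (EuclideanSpace ℝ (Fin n))) (hS : S.Finite)
    (ℓ : EuclideanSpace ℝ (Fin n) → Fin m)
    (hsep : ∀ p ∈ S, ∀ q ∈ S, ℓ p ≠ ℓ q → ‖p - q‖ > 2 * ε) :
    ∃ g : EuclideanSpace ℝ (Fin n) → Fin m → ℝ,
      (∀ i j : Fin m, i ≠ j → ∀ x₁ x₂ : EuclideanSpace ℝ (Fin n),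
        |(g x₁ j - g x₁ i) - (g x₂ j - g x₂ i)| ≤ (1 / ε) * ‖x₁ - x₂‖) ∧
      (∀ p ∈ S, ∀ i : Fin m, i ≠ ℓ p → g p (ℓ p) - g p i ≥ 1) ∧
      (∀ p ∈ S, ∀ i : Fin m, i ≠ ℓ p → g p (ℓ p) - g p i ≥ ε * (1 / ε)) := by
  simpa only [dist_eq_norm] using voronoi_construction_categorical_general hε S ℓ
    fun p hp q hq hpq => (dist_eq_norm p q ▸ hsep p hp q hq hpq).le
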